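/- arXiv:2603.09462 — 4 statements merged into one kernel-verified Lean document; each statement's English description precedes it below -/
import Mathlib

section
/- Let μ be a finite Borel measure on ℝⁿ whose support X is compact, Zariski dense in ℝⁿ, and has positive total mass μ(X) > 0. Let z ∈ ℝⁿ with z ∉ X, set δ := min { ‖z − y‖ : y ∈ X } and ρ := max { ‖z − y‖ : y ∈ X }, and assume δ < ρ. Let φ : ℝⁿ → [0, ∞) be a Lebesgue-integrable function supported in the closed ball of radius ε around z, where 0 < ε < δ/2. For a natural number d define S_d(z) := sup { (∫_{ℝⁿ} φ(y) p(y) dλ(y))² : p is a real polynomial of total degree at most d with ∫ p(y)² dμ(y) = 1 }. Then S_d(z) ≥ (1 + 3δ² / (4(ρ² − δ²)))^{2⌊d/2⌋} · (∫_{B(z, δ/2)} φ(y) dλ(y))² / μ(X), where B(z, δ/2) is the closed Euclidean ball of radius δ/2 around z. In particular S_d(z) grows at least exponentially in d. -/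
open MeasureTheory MvPolynomial

/-- The support of a Borel measure. -/
def measureSupport {α : Type*} [TopologicalSpace α] [MeasurableSpace α]
    (μ : Measure α) : Set α :=
  {x | ∀ U : Set α, IsOpen U → x ∈ U → μ U ≠ 0}

/-!
Up to normalisation, the witness is a power of the quadratic polynomial
`q y = (ρ² - ‖z - y‖²) / (ρ² - δ²)`. On the support of `μ`, which lies in the annulus
`δ ≤ ‖z - y‖ ≤ ρ`, it takes values in `[0, 1]`, so `∫ q ^ (2k) dμ ≤ μ(X)`; on the ball of radius
`r` around `z` it is at least `1 + (δ² - r²) / (ρ² - δ²)`, which is where the mollifier lives.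
The Rayleigh quotient `(∫ φ q ^ k)² / ∫ q ^ (2k) dμ` with `k = ⌊d/2⌋` therefore has the required
size. It bounds the supremum from below only because the supremum is finite: Zariski density makes
`p ↦ p` injective from polynomials into `L²(μ)`, so on the finite-dimensional space of
polynomials of degree at most `d` the linear form `p ↦ ∫ φ p` is bounded in the `L²(μ)` norm.
-/

lemma measureSupport_eq_support {α : Type*} [TopologicalSpace α] [MeasurableSpace α]
    (μ : Measure α) : measureSupport μ = μ.support := by
  rw [Measure.support_eq_forall_isOpen]
  ext x
  exact ⟨fun h U hxU hU => pos_iff_ne_zero.2 (h U hU hxU), fun h U hU hxU => (h U hxU hU).ne'⟩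

lemma sq_sub_sq_pos {a b : ℝ} (ha : 0 ≤ a) (hab : a < b) : 0 < b ^ 2 - a ^ 2 :=
  sub_pos.2 (pow_lt_pow_left₀ hab ha two_ne_zero)

lemma exists_norm_le_mul_norm_of_injective {𝕜 V E F : Type*} [NontriviallyNormedField 𝕜]
    [CompleteSpace 𝕜] [AddCommGroup V] [Module 𝕜 V] [FiniteDimensional 𝕜 V]
    [NormedAddCommGroup E] [NormedSpace 𝕜 E] [NormedAddCommGroup F] [NormedSpace 𝕜 F]
    {T : V →ₗ[𝕜] E} (hT : Function.Injective T) (L : V →ₗ[𝕜] F) :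
    ∃ C : ℝ, ∀ v, ‖L v‖ ≤ C * ‖T v‖ := by
  let e := LinearEquiv.ofInjective T hT
  let M := LinearMap.toContinuousLinearMap (L ∘ₗ e.symm.toLinearMap)
  refine ⟨‖M‖, fun v => ?_⟩
  have hM : M (e v) = L v := by simp [M]
  have he : ‖e v‖ = ‖T v‖ := rfl
  simpa only [hM, he] using M.le_opNorm (e v)

section Measure

variable {α : Type*} [MeasurableSpace α] {μ : Measure α}

lemma eqOn_support_of_ae_eq [TopologicalSpace α] {β : Type*} [TopologicalSpace β] [T2Space β]
    {f g : α → β} (hf : Continuous f) (hg : Continuous g) (h : f =ᵐ[μ] g) :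
    Set.EqOn f g μ.support :=
  Measure.support_subset_of_isClosed (isClosed_eq hf hg) h

lemma memLp_of_isCompact_support [TopologicalSpace α] [HereditarilyLindelofSpace α]
    [OpensMeasurableSpace α] [IsFiniteMeasure μ]
    {E : Type*} [NormedAddCommGroup E] [SecondCountableTopologyEither α E]
    (hμ : IsCompact μ.support) {f : α → E} (hf : Continuous f) (p : ENNReal) :
    MemLp f p μ := by
  obtain ⟨C, hC⟩ := hμ.exists_bound_of_continuousOn hf.continuousOn
  exact MemLp.of_bound hf.aestronglyMeasurable C
    (Filter.mem_of_superset Measure.support_mem_ae hC)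

lemma integrable_mul_of_support_subset_isCompact [TopologicalSpace α] [T2Space α]
    [OpensMeasurableSpace α] {R : Type*} [NormedRing R] [SecondCountableTopologyEither α R]
    {φ g : α → R} {K : Set α} (hφ : Integrable φ μ) (hg : Continuous g) (hK : IsCompact K)
    (hφK : Function.support φ ⊆ K) : Integrable (fun y => φ y * g y) μ :=
  (integrableOn_iff_integrable_of_support_subset
    ((Function.support_mul_subset_left φ g).trans hφK)).1
    (hφ.integrableOn.mul_continuousOn hg.continuousOn hK)

lemma mul_integral_le_integral_mul {φ g : α → ℝ} {a : ℝ} (hφ : Integrable φ μ)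
    (hφg : Integrable (fun y => φ y * g y) μ) (hφ0 : ∀ y, 0 ≤ φ y)
    (hg : ∀ y ∈ Function.support φ, a ≤ g y) :
    a * ∫ y, φ y ∂μ ≤ ∫ y, φ y * g y ∂μ := by
  rw [← integral_const_mul]
  refine integral_mono (hφ.const_mul a) hφg fun y => ?_
  by_cases hy : φ y = 0
  · simp [hy]
  · simpa only [mul_comm a] using mul_le_mul_of_nonneg_left (hg y hy) (hφ0 y)

lemma norm_toLp_two_sq {f : α → ℝ} (hf : MemLp f 2 μ) :
    ‖hf.toLp f‖ ^ 2 = ∫ y, f y ^ 2 ∂μ := by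
  rw [← real_inner_self_eq_norm_sq, L2.inner_def]
  refine integral_congr_ae (hf.coeFn_toLp.mono fun y hy => ?_)
  simp [hy, sq]

end Measure

section Polynomials

variable {ι : Type*}

lemma continuous_eval_euclideanSpace (p : MvPolynomial ι ℝ) :
    Continuous fun y : EuclideanSpace ℝ ι => eval y p :=
  (MvPolynomial.continuous_eval p).comp (PiLp.continuous_ofLp 2 _)

/-- Zariski density of a set of real points, stated through vanishing polynomials so that
no topology has to be introduced. -/
def IsZariskiDense (A : Set (EuclideanSpace ℝ ι)) : Prop :=
  ∀ p : MvPolynomial ι ℝ, (∀ x ∈ A, eval x p = 0) → p = 0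

variable {μ ν : Measure (EuclideanSpace ℝ ι)} {φ : EuclideanSpace ℝ ι → ℝ}

/-- Finiteness of all moments of `μ`, stated as square-integrability of every polynomial so that
polynomials have classes in `L²(μ)`. -/
def HasFiniteMoments (μ : Measure (EuclideanSpace ℝ ι)) : Prop :=
  ∀ p : MvPolynomial ι ℝ, MemLp (fun y : EuclideanSpace ℝ ι => eval y p) 2 μ

/-- The map sending a polynomial to its class in `L²(μ)`. -/
noncomputable def evalLp (hμ : HasFiniteMoments μ) : MvPolynomial ι ℝ →ₗ[ℝ] Lp ℝ 2 μ where
  toFun p := (hμ p).toLp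
  map_add' p q := by
    rw [← MemLp.toLp_add]
    congr 1
    ext y
    simp
  map_smul' c p := by
    rw [RingHom.id_apply, ← MemLp.toLp_const_smul]
    congr 1
    ext y
    simp [smul_eval]

/-- The linear form `p ↦ ∫ φ p dν` on polynomials, whose operator norm the mollified
Christoffel–Darboux kernel measures. -/
noncomputable def mollifiedEval (hφ : ∀ p : MvPolynomial ι ℝ,
    Integrable (fun y : EuclideanSpace ℝ ι => φ y * eval y p) ν) : MvPolynomial ι ℝ →ₗ[ℝ] ℝ where
  toFun p := ∫ y, φ y * eval y p ∂ν
  map_add' p q := by simp only [eval_add, mul_add, integral_add (hφ p) (hφ q)]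
  map_smul' c p := by
    simp only [smul_eval, mul_left_comm _ c, integral_const_mul, RingHom.id_apply, smul_eq_mul]

/-- The values `(∫ φ p dν)²` over polynomials `p` of total degree at most `d` and `L²(μ)`-norm one.
Their supremum is the diagonal value `SMCD_{d,ε}^μ(z, z)` when `φ` is the mollifier at `z` and
`ν` is Lebesgue measure. -/
def smcdValues (μ ν : Measure (EuclideanSpace ℝ ι)) (φ : EuclideanSpace ℝ ι → ℝ) (d : ℕ) : Set ℝ :=
  {t | ∃ p : MvPolynomial ι ℝ, p.totalDegree ≤ d ∧
    (∫ y, (eval y p) ^ 2 ∂μ) = 1 ∧ t = (∫ y, φ y * eval y p ∂ν) ^ 2}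

lemma evalLp_injective (hμ : HasFiniteMoments μ) (hZar : IsZariskiDense μ.support) :
    Function.Injective (evalLp hμ) := by
  refine (injective_iff_map_eq_zero _).2 fun p hp => hZar p ?_
  have hp_ae : (fun y : EuclideanSpace ℝ ι => eval y p) =ᵐ[μ] fun _ => 0 :=
    (hμ p).coeFn_toLp.symm.trans (Lp.eq_zero_iff_ae_eq_zero.1 hp)
  exact eqOn_support_of_ae_eq (continuous_eval_euclideanSpace p) continuous_const hp_ae

lemma integral_eval_sq_pos (hμ : HasFiniteMoments μ) (hZar : IsZariskiDense μ.support)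
    {p : MvPolynomial ι ℝ} (hp : p ≠ 0) : 0 < ∫ y, eval y p ^ 2 ∂μ := by
  rw [← norm_toLp_two_sq (hμ p)]
  have hp_Lp : evalLp hμ p ≠ 0 := (map_ne_zero_iff _ (evalLp_injective hμ hZar)).2 hp
  exact pow_pos (norm_pos_iff.2 hp_Lp) 2

lemma bddAbove_smcdValues [Finite ι] (hμ : HasFiniteMoments μ)
    (hZar : IsZariskiDense μ.support)
    (hφ : ∀ p : MvPolynomial ι ℝ, Integrable (fun y : EuclideanSpace ℝ ι => φ y * eval y p) ν)
    (d : ℕ) : BddAbove (smcdValues μ ν φ d) := by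
  let P := restrictTotalDegree ι ℝ d
  have h_inj : Function.Injective ((evalLp hμ).domRestrict P) :=
    (evalLp_injective hμ hZar).comp Subtype.val_injective
  obtain ⟨K, hK⟩ :=
    exists_norm_le_mul_norm_of_injective h_inj ((mollifiedEval hφ).domRestrict P)
  refine ⟨K ^ 2, ?_⟩
  rintro _ ⟨p, hpd, hp_norm, rfl⟩
  have h_norm : ‖evalLp hμ p‖ = 1 :=
    (pow_eq_one_iff_of_nonneg (norm_nonneg _) two_ne_zero).1
      ((norm_toLp_two_sq (hμ p)).trans hp_norm)
  have h_bound : |∫ y, φ y * eval y p ∂ν| ≤ K * ‖evalLp hμ p‖ :=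
    hK ⟨p, (mem_restrictTotalDegree ι d p).2 hpd⟩
  rw [h_norm, mul_one] at h_bound
  exact sq_le_sq.2 (h_bound.trans (le_abs_self K))

lemma sq_integral_div_le_sSup_smcdValues [Finite ι] (hμ : HasFiniteMoments μ)
    (hZar : IsZariskiDense μ.support)
    (hφ : ∀ p : MvPolynomial ι ℝ, Integrable (fun y : EuclideanSpace ℝ ι => φ y * eval y p) ν)
    {d : ℕ} {p : MvPolynomial ι ℝ} (hp : p ≠ 0) (hpd : p.totalDegree ≤ d) :
    (∫ y, φ y * eval y p ∂ν) ^ 2 / ∫ y, eval y p ^ 2 ∂μ ≤ sSup (smcdValues μ ν φ d) := by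
  set c := ∫ y, eval y p ^ 2 ∂μ
  have hc : 0 < c := integral_eval_sq_pos hμ hZar hp
  have h_scale : (√c)⁻¹ ^ 2 = c⁻¹ := by rw [inv_pow, Real.sq_sqrt hc.le]
  refine le_csSup (bddAbove_smcdValues hμ hZar hφ d) ⟨(√c)⁻¹ • p, ?_, ?_, ?_⟩
  · exact (totalDegree_smul_le _ _).trans hpd
  · simp only [smul_eval, mul_pow, h_scale, integral_const_mul]
    exact inv_mul_cancel₀ hc.ne'
  · simp only [smul_eval, mul_left_comm _ (√c)⁻¹, integral_const_mul, mul_pow, h_scale]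
    rw [div_eq_inv_mul]

section QuadraticPeak

variable [Fintype ι]

/-- The quadratic polynomial in `‖z - y‖` that equals `1` on the sphere of radius `δ` and `0` on
the sphere of radius `ρ` around `z`, for `δ ^ 2 ≠ ρ ^ 2`. -/
noncomputable def quadraticPeak (z : EuclideanSpace ℝ ι) (δ ρ : ℝ) : MvPolynomial ι ℝ :=
  C (ρ ^ 2 - δ ^ 2)⁻¹ * (C (ρ ^ 2) - ∑ i, (X i - C (z i)) ^ 2)

lemma eval_quadraticPeak (z y : EuclideanSpace ℝ ι) (δ ρ : ℝ) :
    eval y (quadraticPeak z δ ρ) = (ρ ^ 2 - dist z y ^ 2) / (ρ ^ 2 - δ ^ 2) := by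
  rw [dist_comm, EuclideanSpace.dist_sq_eq]
  simp [quadraticPeak, Real.dist_eq, div_eq_inv_mul]

lemma totalDegree_quadraticPeak_le (z : EuclideanSpace ℝ ι) (δ ρ : ℝ) :
    (quadraticPeak z δ ρ).totalDegree ≤ 2 := by
  have h_linear (i : ι) : (X i - C (z i) : MvPolynomial ι ℝ).totalDegree ≤ 1 :=
    (totalDegree_sub_C_le _ _).trans (totalDegree_X i).le
  have h_sum : (∑ i, (X i - C (z i)) ^ 2 : MvPolynomial ι ℝ).totalDegree ≤ 2 :=
    totalDegree_finsetSum_le fun i _ =>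
      (totalDegree_pow _ _).trans (Nat.mul_le_mul_left 2 (h_linear i))
  calc (quadraticPeak z δ ρ).totalDegree
      ≤ (C (ρ ^ 2) - ∑ i, (X i - C (z i)) ^ 2 : MvPolynomial ι ℝ).totalDegree := by
        simpa only [quadraticPeak, totalDegree_C, zero_add] using
          totalDegree_mul (C (ρ ^ 2 - δ ^ 2)⁻¹) (C (ρ ^ 2) - ∑ i, (X i - C (z i)) ^ 2)
    _ ≤ 2 := (totalDegree_sub _ _).trans (max_le ((totalDegree_C _).le.trans zero_le_two) h_sum)

variable {z y : EuclideanSpace ℝ ι} {δ ρ r : ℝ}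

lemma quadraticPeak_ne_zero (hδ : 0 ≤ δ) (hδρ : δ < ρ) : quadraticPeak z δ ρ ≠ 0 := by
  have hρ : 0 < ρ ^ 2 := pow_pos (hδ.trans_lt hδρ) 2
  have hD : 0 < ρ ^ 2 - δ ^ 2 := sq_sub_sq_pos hδ hδρ
  intro h
  have h_eval := eval_quadraticPeak z z δ ρ
  rw [h, map_zero, dist_self, zero_pow two_ne_zero, sub_zero] at h_eval
  exact (div_pos hρ hD).ne h_eval

lemma eval_quadraticPeak_mem_Icc (hδ : 0 ≤ δ) (hδρ : δ < ρ) (hy : dist z y ∈ Set.Icc δ ρ) :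
    eval y (quadraticPeak z δ ρ) ∈ Set.Icc 0 1 := by
  have hD : 0 < ρ ^ 2 - δ ^ 2 := sq_sub_sq_pos hδ hδρ
  have hδy : δ ^ 2 ≤ dist z y ^ 2 := pow_le_pow_left₀ hδ hy.1 2
  have hyρ : dist z y ^ 2 ≤ ρ ^ 2 := pow_le_pow_left₀ dist_nonneg hy.2 2
  rw [eval_quadraticPeak]
  exact ⟨div_nonneg (sub_nonneg.2 hyρ) hD.le, (div_le_one hD).2 (sub_le_sub_left hδy _)⟩

lemma one_add_div_le_eval_quadraticPeak (hδ : 0 ≤ δ) (hδρ : δ < ρ)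
    (hy : y ∈ Metric.closedBall z r) :
    1 + (δ ^ 2 - r ^ 2) / (ρ ^ 2 - δ ^ 2) ≤ eval y (quadraticPeak z δ ρ) := by
  have hD : 0 < ρ ^ 2 - δ ^ 2 := sq_sub_sq_pos hδ hδρ
  have hyr : dist z y ^ 2 ≤ r ^ 2 := pow_le_pow_left₀ dist_nonneg (Metric.mem_closedBall'.1 hy) 2
  rw [eval_quadraticPeak, one_add_div hD.ne', sub_add_sub_cancel]
  gcongr

lemma integral_eval_quadraticPeak_pow_sq_le [IsFiniteMeasure μ] (hδ : 0 ≤ δ) (hδρ : δ < ρ)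
    (hann : ∀ y ∈ μ.support, dist z y ∈ Set.Icc δ ρ) (k : ℕ) :
    ∫ y, eval y (quadraticPeak z δ ρ ^ k) ^ 2 ∂μ ≤ μ.real μ.support := by
  have h_le_one : ∀ᵐ y : EuclideanSpace ℝ ι ∂μ, eval y (quadraticPeak z δ ρ ^ k) ^ 2 ≤ 1 := by
    filter_upwards [Measure.support_mem_ae] with y hy
    obtain ⟨h0, h1⟩ := eval_quadraticPeak_mem_Icc hδ hδρ (hann y hy)
    rw [map_pow, ← pow_mul]
    exact pow_le_one₀ h0 h1
  calc ∫ y, eval y (quadraticPeak z δ ρ ^ k) ^ 2 ∂μ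
      ≤ ∫ _, (1 : ℝ) ∂μ := integral_mono_of_nonneg (ae_of_all _ fun _ => sq_nonneg _)
        (integrable_const 1) h_le_one
    _ = μ.real μ.support := by
        rw [integral_const, smul_eq_mul, mul_one]
        exact measureReal_congr (Filter.eventuallyEq_univ.2 Measure.support_mem_ae).symm

end QuadraticPeak

theorem smcd_off_support_exponential_growth_general [Fintype ι] [IsFiniteMeasure μ]
    (hZar : IsZariskiDense μ.support) {z : EuclideanSpace ℝ ι} {δ ρ r : ℝ}
    (hδ : 0 ≤ δ) (hδρ : δ < ρ) (hann : ∀ y ∈ μ.support, dist z y ∈ Set.Icc δ ρ)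
    (hr : 0 ≤ r) (hrρ : r ≤ ρ) (hφint : Integrable φ ν) (hφnn : ∀ y, 0 ≤ φ y)
    (hφsupp : Function.support φ ⊆ Metric.closedBall z r) (d : ℕ) :
    (1 + (δ ^ 2 - r ^ 2) / (ρ ^ 2 - δ ^ 2)) ^ (2 * (d / 2)) * (∫ y, φ y ∂ν) ^ 2 /
      μ.real μ.support ≤ sSup (smcdValues μ ν φ d) := by
  set a := 1 + (δ ^ 2 - r ^ 2) / (ρ ^ 2 - δ ^ 2) with ha
  set q := quadraticPeak z δ ρ ^ (d / 2)
  have h_compact : IsCompact μ.support :=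
    (isCompact_closedBall z ρ).of_isClosed_subset Measure.isClosed_support
      fun y hy => Metric.mem_closedBall'.2 (hann y hy).2
  have hμ : HasFiniteMoments μ := fun p =>
    memLp_of_isCompact_support h_compact (continuous_eval_euclideanSpace p) 2
  have hφ (p : MvPolynomial ι ℝ) : Integrable (fun y : EuclideanSpace ℝ ι => φ y * eval y p) ν :=
    integrable_mul_of_support_subset_isCompact hφint (continuous_eval_euclideanSpace p)
      (isCompact_closedBall z r) hφsupp
  have ha0 : 0 ≤ a := by
    have hD : 0 < ρ ^ 2 - δ ^ 2 := sq_sub_sq_pos hδ hδρ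
    rw [ha, one_add_div hD.ne', sub_add_sub_cancel]
    exact div_nonneg (sub_nonneg.2 (pow_le_pow_left₀ hr hrρ 2)) hD.le
  have hq0 : q ≠ 0 := pow_ne_zero _ (quadraticPeak_ne_zero hδ hδρ)
  have hq_deg : q.totalDegree ≤ d := (totalDegree_pow _ _).trans <|
    (Nat.mul_le_mul_left _ (totalDegree_quadraticPeak_le z δ ρ)).trans (Nat.div_mul_le_self d 2)
  have hq_φ : a ^ (d / 2) * ∫ y, φ y ∂ν ≤ ∫ y, φ y * eval y q ∂ν :=
    mul_integral_le_integral_mul hφint (hφ q) hφnn fun y hy => by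
      rw [map_pow]
      exact pow_le_pow_left₀ ha0 (one_add_div_le_eval_quadraticPeak hδ hδρ (hφsupp hy)) _
  calc a ^ (2 * (d / 2)) * (∫ y, φ y ∂ν) ^ 2 / μ.real μ.support
      = (a ^ (d / 2) * ∫ y, φ y ∂ν) ^ 2 / μ.real μ.support := by rw [mul_pow, ← pow_mul']
    _ ≤ (∫ y, φ y * eval y q ∂ν) ^ 2 / ∫ y, eval y q ^ 2 ∂μ := by
        gcongr
        · exact integral_eval_sq_pos hμ hZar hq0
        · exact mul_nonneg (pow_nonneg ha0 _) (integral_nonneg hφnn)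
        · exact integral_eval_quadraticPeak_pow_sq_le hδ hδρ hann _
    _ ≤ sSup (smcdValues μ ν φ d) := sq_integral_div_le_sSup_smcdValues hμ hZar hφ hq0 hq_deg

end Polynomials

/-- Off-support exponential growth of the support-locator mollified
Christoffel–Darboux polynomial: if `z` lies outside the compact, Zariski
dense support `X` of `μ`, `δ` and `ρ` are the distance and eccentricity of
`z` relative to `X` with `δ < ρ`, and `φ` is a nonnegative integrable
mollifier supported in the closed ball `B(z, ε)` with `0 < ε < δ/2`, then
`SMCD_{d,ε}^μ(z,z) ≥ (1 + 3δ²/(4(ρ² − δ²)))^{2⌊d/2⌋} · (∫_{B(z,δ/2)} φ dλ)² / μ(X)`,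
where `SMCD` is expressed via its variational characterization. -/
theorem smcd_off_support_exponential_growth {n : ℕ}
    (μ : Measure (EuclideanSpace ℝ (Fin n))) [IsFiniteMeasure μ]
    (X : Set (EuclideanSpace ℝ (Fin n))) (hX : X = measureSupport μ)
    (hXc : IsCompact X)
    (hZar : ∀ p : MvPolynomial (Fin n) ℝ, (∀ x ∈ X, eval x p = 0) → p = 0)
    (hXpos : 0 < μ X)
    (z : EuclideanSpace ℝ (Fin n)) (hz : z ∉ X) (δ ρ : ℝ)
    (hδ : IsLeast ((fun y => dist z y) '' X) δ)
    (hρ : IsGreatest ((fun y => dist z y) '' X) ρ)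
    (hδρ : δ < ρ)
    (φ : EuclideanSpace ℝ (Fin n) → ℝ) (hφint : Integrable φ volume)
    (hφnn : ∀ y, 0 ≤ φ y) (ε : ℝ) (hε0 : 0 < ε) (hεδ : ε < δ / 2)
    (hφsupp : Function.support φ ⊆ Metric.closedBall z ε) (d : ℕ) :
    (1 + 3 * δ ^ 2 / (4 * (ρ ^ 2 - δ ^ 2))) ^ (2 * (d / 2)) *
        (∫ y in Metric.closedBall z (δ / 2), φ y) ^ 2 / (μ X).toReal ≤
      sSup {t : ℝ | ∃ p : MvPolynomial (Fin n) ℝ, p.totalDegree ≤ d ∧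
        (∫ y, (eval y p) ^ 2 ∂μ) = 1 ∧ t = (∫ y, φ y * eval y p) ^ 2} := by
  rw [measureSupport_eq_support] at hX
  subst hX
  have hδ0 : 0 < δ := by linarith
  have hsupp : Function.support φ ⊆ Metric.closedBall z (δ / 2) :=
    hφsupp.trans (Metric.closedBall_subset_closedBall hεδ.le)
  have hbase : 3 * δ ^ 2 / (4 * (ρ ^ 2 - δ ^ 2)) = (δ ^ 2 - (δ / 2) ^ 2) / (ρ ^ 2 - δ ^ 2) := by
    rw [← div_div]
    ring
  rw [setIntegral_eq_integral_of_forall_compl_eq_zero fun y hy =>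
    Function.notMem_support.1 (Set.notMem_subset hsupp hy), hbase]
  exact smcd_off_support_exponential_growth_general hZar hδ0.le hδρ
    (fun y hy => ⟨hδ.2 ⟨y, hy, rfl⟩, hρ.2 ⟨y, hy, rfl⟩⟩) (by linarith) (by linarith)
    hφint hφnn hsupp d
end

section
/- Let n ≥ 2 be an integer, set α := (n − 2)/2, and let k ≥ 1 be an integer. Then both integrals below are finite and nonzero, and (k²/4) · ∫_{−1}^{1} ((1 + t)/2)^{2k − 2} (1 − t²)^{α + 1/2} dt / ∫_{−1}^{1} ((1 + t)/2)^{2k} (1 − t²)^{α − 1/2} dt = k² (n − 1)/(4k + n − 3). In particular this quantity is O(k) as k → ∞. -/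
open MeasureTheory intervalIntegral

/-!
Factoring `1 - t² = (1 + t)(1 - t)` turns both integrands into constant multiples of Jacobi weights
`(1 + t) ^ a * (1 - t) ^ b`. For `a, b > 0` such a weight vanishes at `±1`, so its derivative
integrates to zero over `[-1, 1]`; this reads
`a * ∫ (1 + t) ^ (a - 1) * (1 - t) ^ b = b * ∫ (1 + t) ^ a * (1 - t) ^ (b - 1)`.
With `a = 2k + α - 1/2` and `b = α + 1/2` these are the two integrals of the theorem, up to powers
of two, so their ratio is read off without evaluating either of them.
-/

/-- The Jacobi weight `(1 + t) ^ a * (1 - t) ^ b` with real exponents, meaningful on `(-1, 1)`.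
The exponent of `1 + t` comes first, opposite to the usual order in `P_n^{(α, β)}`. -/
noncomputable def jacobiWeight (a b t : ℝ) : ℝ :=
  (1 + t) ^ a * (1 - t) ^ b

section JacobiWeight

variable {a b t : ℝ}

theorem jacobiWeight_pos (ht : t ∈ Set.Ioo (-1) 1) : 0 < jacobiWeight a b t :=
  mul_pos (Real.rpow_pos_of_pos (by linarith [ht.1]) a)
    (Real.rpow_pos_of_pos (by linarith [ht.2]) b)

theorem continuous_jacobiWeight (ha : 0 ≤ a) (hb : 0 ≤ b) : Continuous (jacobiWeight a b) :=
  ((by fun_prop : Continuous fun t : ℝ => 1 + t).rpow_const fun _ => Or.inr ha).mul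
    ((by fun_prop : Continuous fun t : ℝ => 1 - t).rpow_const fun _ => Or.inr hb)

theorem jacobiWeight_neg_one (ha : a ≠ 0) : jacobiWeight a b (-1) = 0 := by
  simp [jacobiWeight, Real.zero_rpow ha]

theorem jacobiWeight_one (hb : b ≠ 0) : jacobiWeight a b 1 = 0 := by
  simp [jacobiWeight, Real.zero_rpow hb]

theorem jacobiWeight_neg : jacobiWeight a b (-t) = jacobiWeight b a t := by
  simp only [jacobiWeight, sub_neg_eq_add, ← sub_eq_add_neg, mul_comm]

theorem intervalIntegrable_jacobiWeight_neg_one_zero (ha : -1 < a) :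
    IntervalIntegrable (jacobiWeight a b) volume (-1) 0 := by
  have h_left : IntervalIntegrable (fun t : ℝ => (1 + t) ^ a) volume (-1) 0 := by
    simpa using (intervalIntegrable_rpow' (a := 0) (b := 1) ha).comp_add_left 1
  refine h_left.mul_continuousOn (ContinuousOn.rpow_const (by fun_prop) fun t ht => Or.inl ?_)
  rw [Set.uIcc_of_le (by norm_num)] at ht
  linarith [ht.2]

theorem intervalIntegrable_jacobiWeight (ha : -1 < a) (hb : -1 < b) :
    IntervalIntegrable (jacobiWeight a b) volume (-1) 1 := by
  have h_right : IntervalIntegrable (jacobiWeight a b) volume 0 1 := by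
    rw [IntervalIntegrable.iff_comp_neg]
    simpa only [jacobiWeight_neg, neg_zero] using
      (intervalIntegrable_jacobiWeight_neg_one_zero hb).symm
  exact (intervalIntegrable_jacobiWeight_neg_one_zero ha).trans h_right

theorem integral_jacobiWeight_pos (ha : -1 < a) (hb : -1 < b) :
    0 < ∫ t in (-1 : ℝ)..1, jacobiWeight a b t :=
  intervalIntegral_pos_of_pos_on (intervalIntegrable_jacobiWeight ha hb)
    (fun _ ht => jacobiWeight_pos ht) (by norm_num)

theorem hasDerivAt_jacobiWeight (ht : t ∈ Set.Ioo (-1) 1) :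
    HasDerivAt (jacobiWeight a b)
      (a * jacobiWeight (a - 1) b t - b * jacobiWeight a (b - 1) t) t := by
  have h_add : HasDerivAt (fun t : ℝ => (1 + t) ^ a) (1 * a * (1 + t) ^ (a - 1)) t :=
    ((hasDerivAt_id t).const_add 1).rpow_const (Or.inl (by simp only [id]; linarith [ht.1]))
  have h_sub : HasDerivAt (fun t : ℝ => (1 - t) ^ b) (-1 * b * (1 - t) ^ (b - 1)) t :=
    ((hasDerivAt_id t).const_sub 1).rpow_const (Or.inl (by simp only [id]; linarith [ht.2]))
  refine (h_add.mul h_sub).congr_deriv ?_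
  simp only [jacobiWeight]
  ring

theorem mul_integral_jacobiWeight_sub_one (ha : 0 < a) (hb : 0 < b) :
    a * ∫ t in (-1 : ℝ)..1, jacobiWeight (a - 1) b t =
      b * ∫ t in (-1 : ℝ)..1, jacobiWeight a (b - 1) t := by
  have h_int_left : IntervalIntegrable (fun t => a * jacobiWeight (a - 1) b t) volume (-1) 1 :=
    (intervalIntegrable_jacobiWeight (by linarith) (by linarith)).const_mul a
  have h_int_right : IntervalIntegrable (fun t => b * jacobiWeight a (b - 1) t) volume (-1) 1 :=
    (intervalIntegrable_jacobiWeight (by linarith) (by linarith)).const_mul b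
  have h_ftc := integral_eq_sub_of_hasDerivAt_of_le (by norm_num)
    (continuous_jacobiWeight ha.le hb.le).continuousOn (fun _ => hasDerivAt_jacobiWeight)
    (h_int_left.sub h_int_right)
  rw [jacobiWeight_neg_one ha.ne', jacobiWeight_one hb.ne', sub_zero,
    integral_sub h_int_left h_int_right, intervalIntegral.integral_const_mul,
    intervalIntegral.integral_const_mul] at h_ftc
  exact sub_eq_zero.mp h_ftc

end JacobiWeight

section GegenbauerWeight

variable {p q : ℝ}

theorem half_one_add_rpow_mul_one_sub_sq_rpow {t : ℝ} (ht : t ∈ Set.Ioo (-1) 1) :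
    ((1 + t) / 2) ^ p * (1 - t ^ 2) ^ q = (2 ^ p)⁻¹ * jacobiWeight (p + q) q t := by
  have h_add : 0 < 1 + t := by linarith [ht.1]
  have h_sub : 0 < 1 - t := by linarith [ht.2]
  rw [jacobiWeight, Real.div_rpow h_add.le zero_le_two,
    show 1 - t ^ 2 = (1 + t) * (1 - t) by ring, Real.mul_rpow h_add.le h_sub.le,
    Real.rpow_add h_add]
  ring

theorem intervalIntegrable_half_one_add_rpow_mul_one_sub_sq_rpow (hpq : -1 < p + q) (hq : -1 < q) :
    IntervalIntegrable (fun t : ℝ => ((1 + t) / 2) ^ p * (1 - t ^ 2) ^ q) volume (-1) 1 := by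
  refine ((intervalIntegrable_jacobiWeight hpq hq).const_mul (2 ^ p)⁻¹).congr_uIoo fun t ht => ?_
  rw [Set.uIoo_of_le (by norm_num)] at ht
  exact (half_one_add_rpow_mul_one_sub_sq_rpow ht).symm

theorem integral_half_one_add_rpow_mul_one_sub_sq_rpow :
    ∫ t in (-1 : ℝ)..1, ((1 + t) / 2) ^ p * (1 - t ^ 2) ^ q =
      (2 ^ p)⁻¹ * ∫ t in (-1 : ℝ)..1, jacobiWeight (p + q) q t := by
  rw [← intervalIntegral.integral_const_mul]
  exact integral_congr_Ioo_of_le (by norm_num) fun _ => half_one_add_rpow_mul_one_sub_sq_rpow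

theorem integral_half_one_add_rpow_mul_one_sub_sq_rpow_pos (hpq : -1 < p + q) (hq : -1 < q) :
    0 < ∫ t in (-1 : ℝ)..1, ((1 + t) / 2) ^ p * (1 - t ^ 2) ^ q := by
  rw [integral_half_one_add_rpow_mul_one_sub_sq_rpow]
  exact mul_pos (by positivity) (integral_jacobiWeight_pos hpq hq)

theorem mul_integral_half_one_add_rpow_mul_one_sub_sq_rpow (hpq : -1 < p + q) (hq : 0 < q) :
    (p + q + 1) * ∫ t in (-1 : ℝ)..1, ((1 + t) / 2) ^ p * (1 - t ^ 2) ^ q =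
      4 * q * ∫ t in (-1 : ℝ)..1, ((1 + t) / 2) ^ (p + 2) * (1 - t ^ 2) ^ (q - 1) := by
  have h_parts := mul_integral_jacobiWeight_sub_one (a := p + q + 1) (by linarith) hq
  rw [add_sub_cancel_right] at h_parts
  have h_two : (2 : ℝ) ^ (p + 2) = 2 ^ p * 4 := by
    rw [Real.rpow_add two_pos]
    norm_num
  rw [integral_half_one_add_rpow_mul_one_sub_sq_rpow,
    integral_half_one_add_rpow_mul_one_sub_sq_rpow,
    show p + 2 + (q - 1) = p + q + 1 by ring, h_two, mul_inv]
  linear_combination (2 ^ p)⁻¹ * h_parts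

end GegenbauerWeight

theorem gegenbauer_gradient_energy_ratio_general (n k α : ℝ) (hn : 1 < n) (hk : 3 < 4 * k + n)
    (hα : α = (n - 2) / 2) :
    IntervalIntegrable
      (fun t : ℝ => ((1 + t) / 2) ^ (2 * k - 2) * (1 - t ^ 2) ^ (α + 1 / 2)) volume (-1) 1 ∧
    IntervalIntegrable
      (fun t : ℝ => ((1 + t) / 2) ^ (2 * k) * (1 - t ^ 2) ^ (α - 1 / 2)) volume (-1) 1 ∧
    (∫ t in (-1 : ℝ)..1, ((1 + t) / 2) ^ (2 * k - 2) * (1 - t ^ 2) ^ (α + 1 / 2)) ≠ 0 ∧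
    (∫ t in (-1 : ℝ)..1, ((1 + t) / 2) ^ (2 * k) * (1 - t ^ 2) ^ (α - 1 / 2)) ≠ 0 ∧
    (k ^ 2 / 4) *
        (∫ t in (-1 : ℝ)..1, ((1 + t) / 2) ^ (2 * k - 2) * (1 - t ^ 2) ^ (α + 1 / 2)) /
      (∫ t in (-1 : ℝ)..1, ((1 + t) / 2) ^ (2 * k) * (1 - t ^ 2) ^ (α - 1 / 2)) =
      k ^ 2 * (n - 1) / (4 * k + n - 3) := by
  have h_num_pos := integral_half_one_add_rpow_mul_one_sub_sq_rpow_pos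
    (p := 2 * k - 2) (q := α + 1 / 2) (by linarith) (by linarith)
  have h_den_pos := integral_half_one_add_rpow_mul_one_sub_sq_rpow_pos
    (p := 2 * k) (q := α - 1 / 2) (by linarith) (by linarith)
  have h_parts := mul_integral_half_one_add_rpow_mul_one_sub_sq_rpow
    (p := 2 * k - 2) (q := α + 1 / 2) (by linarith) (by linarith)
  rw [sub_add_cancel, show α + 1 / 2 - 1 = α - 1 / 2 by ring] at h_parts
  refine ⟨intervalIntegrable_half_one_add_rpow_mul_one_sub_sq_rpow (by linarith) (by linarith),
    intervalIntegrable_half_one_add_rpow_mul_one_sub_sq_rpow (by linarith) (by linarith),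
    h_num_pos.ne', h_den_pos.ne', ?_⟩
  rw [div_eq_div_iff h_den_pos.ne' (by linarith)]
  subst hα
  linear_combination (k ^ 2 / 2) * h_parts

/-- The gradient-energy ratio `R₁(k)` of the algebraic spherical mollifier
`φ_{x,k}(y) = ((1+⟨x,y⟩)/2)^k`: with `α = (n−2)/2` and `k ≥ 1`, both
Gegenbauer-weighted integrals are finite and nonzero, and
`(k²/4) ∫ ((1+t)/2)^{2k−2} (1−t²)^{α+1/2} dt / ∫ ((1+t)/2)^{2k} (1−t²)^{α−1/2} dt
  = k² (n−1)/(4k+n−3)`; in particular this quantity is `O(k)` as `k → ∞`. -/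
theorem gegenbauer_gradient_energy_ratio (n : ℕ) (hn : 2 ≤ n) (k : ℕ) (hk : 1 ≤ k)
    (α : ℝ) (hα : α = ((n : ℝ) - 2) / 2) :
    IntervalIntegrable
      (fun t : ℝ => ((1 + t) / 2) ^ (2 * k - 2) * (1 - t ^ 2) ^ (α + 1/2))
      volume (-1) 1 ∧
    IntervalIntegrable
      (fun t : ℝ => ((1 + t) / 2) ^ (2 * k) * (1 - t ^ 2) ^ (α - 1/2))
      volume (-1) 1 ∧
    (∫ t in (-1 : ℝ)..1,
        ((1 + t) / 2) ^ (2 * k - 2) * (1 - t ^ 2) ^ (α + 1/2)) ≠ 0 ∧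
    (∫ t in (-1 : ℝ)..1,
        ((1 + t) / 2) ^ (2 * k) * (1 - t ^ 2) ^ (α - 1/2)) ≠ 0 ∧
    ((k : ℝ) ^ 2 / 4) *
        (∫ t in (-1 : ℝ)..1,
          ((1 + t) / 2) ^ (2 * k - 2) * (1 - t ^ 2) ^ (α + 1/2)) /
      (∫ t in (-1 : ℝ)..1,
          ((1 + t) / 2) ^ (2 * k) * (1 - t ^ 2) ^ (α - 1/2)) =
      (k : ℝ) ^ 2 * ((n : ℝ) - 1) / (4 * (k : ℝ) + (n : ℝ) - 3) := by
  have h_exp : 2 * (k : ℝ) - 2 = (2 * k - 2 : ℕ) := by push_cast [show 2 ≤ 2 * k by lia]; rfl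
  have h := gegenbauer_gradient_energy_ratio_general n k α (by exact_mod_cast hn)
    (by exact_mod_cast (by lia : 3 < 4 * k + n)) hα
  rw [h_exp] at h
  exact_mod_cast h
end

section
/- Let n ≥ 2, let S := S^{n−1} be the unit sphere in ℝⁿ, and let λ be the rotation-invariant (normalized surface) probability measure on S. For x ∈ S and an integer k ≥ 0 define φ_{x,k}(y) := ((1 + ⟨x, y⟩)/2)^k. Then for every x ∈ S and k ≥ 0, ∫_S (1 − ⟨x, y⟩) φ_{x,k}(y)² dλ(y) / ∫_S φ_{x,k}(y)² dλ(y) = (n − 1)/(2k + n − 1). In particular this quantity is independent of x and tends to 0 as k → ∞. -/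
open MeasureTheory RealInnerProductSpace

/-!
For a skew-adjoint operator `A`, the flow `exp (t A)` consists of rotations, so differentiating
`∫ g (exp (t A) y) dμ(y) = ∫ g dμ` at `t = 0` gives `∫ dg(y)(A y) dμ(y) = 0`. Apply this to
`g y = f ⟪x, y⟫ ⟪v, y⟫` and the generator `A y = ⟪x, y⟫ v - ⟪v, y⟫ x`, and sum over `v` in an
orthonormal basis. The result is the Gegenbauer-type integration by parts
`∫ f' ⟪x, y⟫ (‖x‖² ‖y‖² - ⟪x, y⟫²) dμ = (n - 1) ∫ f ⟪x, y⟫ ⟪x, y⟫ dμ`.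
On the unit sphere the choice `f s = ((1 + s) / 2) ^ m` makes it a linear relation between the two
integrals of the quotient, while `f = 1` makes the barycenter of `μ` vanish, so that `μ` does not
live on `{-x}` and the denominator is nonzero.
-/

section SkewFlow

variable {E : Type*} [NormedAddCommGroup E] [InnerProductSpace ℝ E] [CompleteSpace E]

/-- The one-parameter group `t ↦ exp (t A)` of linear isometries generated by a skew-adjoint
operator `A`. -/
noncomputable def skewFlow (A : skewAdjoint (E →L[ℝ] E)) (t : ℝ) : E ≃ₗᵢ[ℝ] E :=
  Unitary.linearIsometryEquiv ⟨NormedSpace.exp (t • (A : E →L[ℝ] E)), by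
    let _ : NormedAlgebra ℚ (E →L[ℝ] E) := .restrictScalars ℚ ℝ _
    exact NormedSpace.exp_mem_unitary_of_mem_skewAdjoint (t • A).2⟩

lemma skewFlow_apply (A : skewAdjoint (E →L[ℝ] E)) (t : ℝ) (y : E) :
    skewFlow A t y = NormedSpace.exp (t • (A : E →L[ℝ] E)) y :=
  rfl

lemma skewFlow_zero_apply (A : skewAdjoint (E →L[ℝ] E)) (y : E) : skewFlow A 0 y = y := by
  simp [skewFlow_apply]

lemma skewFlow_add_apply (A : skewAdjoint (E →L[ℝ] E)) (s t : ℝ) (y : E) :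
    skewFlow A (s + t) y = skewFlow A s (skewFlow A t y) := by
  let _ : NormedAlgebra ℚ (E →L[ℝ] E) := .restrictScalars ℚ ℝ _
  have hcomm : Commute (s • (A : E →L[ℝ] E)) (t • (A : E →L[ℝ] E)) :=
    ((Commute.refl _).smul_left s).smul_right t
  simp only [skewFlow_apply, add_smul, NormedSpace.exp_add_of_commute hcomm,
    mul_apply_eq_comp]

lemma hasDerivAt_skewFlow_apply (A : skewAdjoint (E →L[ℝ] E)) (y : E) (t : ℝ) :
    HasDerivAt (fun s ↦ skewFlow A s y) ((A : E →L[ℝ] E) (skewFlow A t y)) t := by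
  simpa [skewFlow_apply] using
    (hasDerivAt_exp_smul_const' (A : E →L[ℝ] E) t).clm_apply (hasDerivAt_const t y)

/-- The generator `y ↦ ⟪x, y⟫ v - ⟪v, y⟫ x` of the rotations in the plane of `x` and `v`. -/
noncomputable def planeRotationGenerator (x v : E) : skewAdjoint (E →L[ℝ] E) :=
  ⟨InnerProductSpace.rankOne ℝ v x - InnerProductSpace.rankOne ℝ x v, by
    simp [skewAdjoint.mem_iff, ContinuousLinearMap.star_eq_adjoint]⟩

lemma planeRotationGenerator_apply (x v y : E) :
    (planeRotationGenerator x v : E →L[ℝ] E) y = ⟪x, y⟫ • v - ⟪v, y⟫ • x :=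
  rfl

lemma det_skewFlow_pos (A : skewAdjoint (E →L[ℝ] E)) (t : ℝ) :
    0 < LinearMap.det ((skewFlow A t).toLinearEquiv : E →ₗ[ℝ] E) := by
  have hhalf : ((skewFlow A t).toLinearEquiv : E →ₗ[ℝ] E) =
      (skewFlow A (t / 2)).toLinearEquiv * (skewFlow A (t / 2)).toLinearEquiv := by
    ext y
    simpa using skewFlow_add_apply A (t / 2) (t / 2) y
  rw [hhalf, map_mul]
  exact mul_self_pos.2 (LinearEquiv.isUnit_det' _).ne_zero

end SkewFlow

lemma integrable_of_continuous_of_ae_norm_le {E F : Type*} [NormedAddCommGroup E] [ProperSpace E]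
    [MeasurableSpace E] [BorelSpace E] [NormedAddCommGroup F] {μ : Measure E} [IsFiniteMeasure μ]
    {R : ℝ} {g : E → F} (hg : Continuous g) (hR : ∀ᵐ y ∂μ, ‖y‖ ≤ R) : Integrable g μ := by
  obtain ⟨C, hC⟩ :=
    (isCompact_closedBall (0 : E) R).exists_bound_of_continuousOn hg.continuousOn
  refine .of_bound hg.aestronglyMeasurable C ?_
  filter_upwards [hR] with y hy using hC y (mem_closedBall_zero_iff.2 hy)

section InfinitesimalInvariance

variable {E : Type*} [NormedAddCommGroup E] [InnerProductSpace ℝ E] [FiniteDimensional ℝ E]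
  [MeasurableSpace E] [BorelSpace E] {μ : Measure E} [IsFiniteMeasure μ]
  {F : Type*} [NormedAddCommGroup F] [NormedSpace ℝ F] {R : ℝ}

lemma integral_fderiv_apply_eq_zero_of_map_skewFlow (hR : ∀ᵐ y ∂μ, ‖y‖ ≤ R)
    {A : skewAdjoint (E →L[ℝ] E)} (hA : ∀ t, μ.map (skewFlow A t) = μ)
    {g : E → F} (hg : ContDiff ℝ 1 g) :
    ∫ y, fderiv ℝ g y ((A : E →L[ℝ] E) y) ∂μ = 0 := by
  let g' : E → F := fun y ↦ fderiv ℝ g y ((A : E →L[ℝ] E) y)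
  have hg' : Continuous g' := (hg.continuous_fderiv one_ne_zero).clm_apply (by fun_prop)
  obtain ⟨C, hC⟩ :=
    (isCompact_closedBall (0 : E) R).exists_bound_of_continuousOn hg'.continuousOn
  have hbound : ∀ᵐ y ∂μ, ∀ t ∈ Set.univ, ‖g' (skewFlow A t y)‖ ≤ C := by
    filter_upwards [hR] with y hy t _ using hC _ (by simpa using hy)
  have hderiv (y : E) (t : ℝ) :
      HasDerivAt (fun s ↦ g (skewFlow A s y)) (g' (skewFlow A t y)) t :=
    (hg.differentiable one_ne_zero _).hasFDerivAt.comp_hasDerivAt t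
      (hasDerivAt_skewFlow_apply A y t)
  have hflow (t : ℝ) : Continuous (skewFlow A t) := (skewFlow A t).continuous
  have hdiff := (hasDerivAt_integral_of_dominated_loc_of_deriv_le Filter.univ_mem
    (.of_forall fun t ↦ (hg.continuous.comp (hflow t)).aestronglyMeasurable)
    (integrable_of_continuous_of_ae_norm_le (hg.continuous.comp (hflow 0)) hR)
    (hg'.comp (hflow 0)).aestronglyMeasurable hbound (integrable_const C)
    (.of_forall fun y t _ ↦ hderiv y t)).2
  have hconst (t : ℝ) : ∫ y, g (skewFlow A t y) ∂μ = ∫ y, g y ∂μ := by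
    conv_rhs => rw [← hA t, integral_map (hflow t).aemeasurable
      hg.continuous.aestronglyMeasurable]
  simp only [Function.comp_apply, hconst, skewFlow_zero_apply] at hdiff
  exact hdiff.unique (hasDerivAt_const _ _)

end InfinitesimalInvariance

section RotationInvariant

variable {E : Type*} [NormedAddCommGroup E] [InnerProductSpace ℝ E] [MeasurableSpace E]

/-- Invariance of a measure under the special orthogonal group, whose elements are encoded as the
linear isometries of positive determinant. In infinite dimension `LinearMap.det` is constantly `1`,
so there the invariance is under all linear isometries. -/
def IsRotationInvariant (μ : Measure E) : Prop :=
  ∀ e : E ≃ₗᵢ[ℝ] E, 0 < LinearMap.det (e.toLinearEquiv : E →ₗ[ℝ] E) → μ.map e = μ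

variable [FiniteDimensional ℝ E] [BorelSpace E] {μ : Measure E} [IsFiniteMeasure μ] {R : ℝ}

lemma integral_fderiv_zonal_mul_inner_eq_zero (hμ : IsRotationInvariant μ)
    (hR : ∀ᵐ y ∂μ, ‖y‖ ≤ R) {f : ℝ → ℝ} (hf : ContDiff ℝ 1 f) (x v : E) :
    ∫ y, (deriv f ⟪x, y⟫ * ((⟪x, v⟫ * ⟪x, y⟫ - ‖x‖ ^ 2 * ⟪v, y⟫) * ⟪v, y⟫) +
      f ⟪x, y⟫ * (‖v‖ ^ 2 * ⟪x, y⟫ - ⟪x, v⟫ * ⟪v, y⟫)) ∂μ = 0 := by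
  let A := planeRotationGenerator x v
  let g : E → ℝ := fun y ↦ f ⟪x, y⟫ * ⟪v, y⟫
  have hg : ContDiff ℝ 1 g :=
    (hf.comp (innerSL ℝ x).contDiff).mul (innerSL ℝ v).contDiff
  rw [← integral_fderiv_apply_eq_zero_of_map_skewFlow hR
    (fun t ↦ hμ _ (det_skewFlow_pos A t)) hg]
  congr 1 with y
  have hinner (w : E) : HasFDerivAt (fun y ↦ ⟪w, y⟫) (innerSL ℝ w) y := (innerSL ℝ w).hasFDerivAt
  have hfx : HasFDerivAt (fun y ↦ f ⟪x, y⟫) (deriv f ⟪x, y⟫ • innerSL ℝ x) y :=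
    (hf.differentiable one_ne_zero _).hasDerivAt.comp_hasFDerivAt y (hinner x)
  have hdg : HasFDerivAt g (f ⟪x, y⟫ • innerSL ℝ v + ⟪v, y⟫ • deriv f ⟪x, y⟫ • innerSL ℝ x) y :=
    hfx.mul (hinner v)
  simp only [hdg.fderiv, A, planeRotationGenerator_apply, add_apply,
    smul_apply, innerSL_apply_apply, inner_sub_right, real_inner_smul_right,
    real_inner_self_eq_norm_sq, real_inner_comm x v, smul_eq_mul]
  ring

theorem integral_deriv_zonal_eq_integral_zonal_mul_inner (hμ : IsRotationInvariant μ)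
    (hR : ∀ᵐ y ∂μ, ‖y‖ ≤ R) {f : ℝ → ℝ} (hf : ContDiff ℝ 1 f) (x : E) :
    ∫ y, deriv f ⟪x, y⟫ * (‖x‖ ^ 2 * ‖y‖ ^ 2 - ⟪x, y⟫ ^ 2) ∂μ =
      (Module.finrank ℝ E - 1) * ∫ y, f ⟪x, y⟫ * ⟪x, y⟫ ∂μ := by
  let b := stdOrthonormalBasis ℝ E
  have hf₀ : Continuous f := hf.continuous
  have hsum (y : E) :
      ∑ i, (deriv f ⟪x, y⟫ * ((⟪x, b i⟫ * ⟪x, y⟫ - ‖x‖ ^ 2 * ⟪b i, y⟫) * ⟪b i, y⟫) +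
        f ⟪x, y⟫ * (‖b i‖ ^ 2 * ⟪x, y⟫ - ⟪x, b i⟫ * ⟪b i, y⟫)) =
      (Module.finrank ℝ E - 1) * (f ⟪x, y⟫ * ⟪x, y⟫) -
        deriv f ⟪x, y⟫ * (‖x‖ ^ 2 * ‖y‖ ^ 2 - ⟪x, y⟫ ^ 2) := by
    have hfirst : ∑ i, (⟪x, b i⟫ * ⟪x, y⟫ - ‖x‖ ^ 2 * ⟪b i, y⟫) * ⟪b i, y⟫ =
        ⟪x, y⟫ ^ 2 - ‖x‖ ^ 2 * ‖y‖ ^ 2 := by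
      simp only [sub_mul, Finset.sum_sub_distrib, mul_right_comm _ ⟪x, y⟫, ← Finset.sum_mul,
        b.sum_inner_mul_inner, mul_assoc (‖x‖ ^ 2), ← Finset.mul_sum, ← sq, b.sum_sq_inner_right]
    have hsecond : ∑ i, (‖b i‖ ^ 2 * ⟪x, y⟫ - ⟪x, b i⟫ * ⟪b i, y⟫) =
        (Module.finrank ℝ E - 1) * ⟪x, y⟫ := by
      simp [b.sum_inner_mul_inner, sub_mul]
    rw [Finset.sum_add_distrib, ← Finset.mul_sum, ← Finset.mul_sum, hfirst, hsecond]
    ring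
  have hzero := Finset.sum_eq_zero fun i (_ : i ∈ Finset.univ) ↦
    integral_fderiv_zonal_mul_inner_eq_zero hμ hR hf x (b i)
  rw [← integral_finsetSum _ fun i _ ↦ integrable_of_continuous_of_ae_norm_le (by fun_prop) hR]
    at hzero
  simp only [hsum] at hzero
  rw [integral_sub (integrable_of_continuous_of_ae_norm_le (by fun_prop) hR)
    (integrable_of_continuous_of_ae_norm_le (by fun_prop) hR), integral_const_mul] at hzero
  exact (sub_eq_zero.1 hzero).symm

lemma integral_inner_eq_zero (hμ : IsRotationInvariant μ) (hR : ∀ᵐ y ∂μ, ‖y‖ ≤ R)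
    (hE : 1 < Module.finrank ℝ E) (x : E) : ∫ y, ⟪x, y⟫ ∂μ = 0 := by
  have hmoment : (Module.finrank ℝ E - 1 : ℝ) * ∫ y, ⟪x, y⟫ ∂μ = 0 := by
    simpa using
      (integral_deriv_zonal_eq_integral_zonal_mul_inner hμ hR (contDiff_const (c := 1)) x).symm
  have hdim : (Module.finrank ℝ E - 1 : ℝ) ≠ 0 := sub_ne_zero.2 (by exact_mod_cast hE.ne')
  exact (mul_eq_zero.1 hmoment).resolve_left hdim

end RotationInvariant

section SphericalMollifier

variable {E : Type*} [NormedAddCommGroup E] [InnerProductSpace ℝ E]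

/-- The zonal polynomial mollifier `φ_{x,k}` of the unit sphere, extended to the whole space. -/
noncomputable def sphericalMollifier (x : E) (k : ℕ) (y : E) : ℝ :=
  ((1 + ⟪x, y⟫) / 2) ^ k

lemma continuous_sphericalMollifier (x : E) (k : ℕ) : Continuous (sphericalMollifier x k) := by
  unfold sphericalMollifier
  fun_prop

lemma sphericalMollifier_nonneg {x y : E} (hx : ‖x‖ = 1) (hy : ‖y‖ = 1) (k : ℕ) :
    0 ≤ sphericalMollifier x k y := by
  have hxy : -1 ≤ ⟪x, y⟫ := by simpa [hx, hy] using neg_le_of_abs_le (abs_real_inner_le_norm x y)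
  exact pow_nonneg (by linarith) k

variable [FiniteDimensional ℝ E] [MeasurableSpace E] [BorelSpace E] {μ : Measure E}
  [IsFiniteMeasure μ]

lemma mul_integral_one_sub_inner_mul_sphericalMollifier (hμ : IsRotationInvariant μ)
    (hsphere : ∀ᵐ y ∂μ, ‖y‖ = 1) {x : E} (hx : ‖x‖ = 1) (m : ℕ) :
    (m + Module.finrank ℝ E - 1) * ∫ y, (1 - ⟪x, y⟫) * sphericalMollifier x m y ∂μ =
      (Module.finrank ℝ E - 1) * ∫ y, sphericalMollifier x m y ∂μ := by
  have hball : ∀ᵐ y ∂μ, ‖y‖ ≤ 1 := hsphere.mono fun _ hy ↦ hy.le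
  let f : ℝ → ℝ := fun s ↦ ((1 + s) / 2) ^ m
  have hderiv (s : ℝ) : deriv f s * (1 - s ^ 2) = m * ((1 - s) * f s) := by
    have hf : HasDerivAt f (m * ((1 + s) / 2) ^ (m - 1) * (1 / 2)) s :=
      (((hasDerivAt_id s).const_add 1).div_const 2).pow m
    rw [hf.deriv]
    rcases m with _ | m
    · simp
    · simp only [f, Nat.add_sub_cancel]
      ring
  have hparts : m * ∫ y, (1 - ⟪x, y⟫) * sphericalMollifier x m y ∂μ =
      (Module.finrank ℝ E - 1) * ∫ y, sphericalMollifier x m y * ⟪x, y⟫ ∂μ := by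
    refine .trans ?_
      (integral_deriv_zonal_eq_integral_zonal_mul_inner hμ hball (f := f) (by fun_prop) x)
    rw [← integral_const_mul]
    refine integral_congr_ae (hsphere.mono fun y hy ↦ ?_)
    simp only [hx, hy, one_pow, one_mul, hderiv]
    rfl
  have hcont := continuous_sphericalMollifier x m
  have hsplit : ∫ y, sphericalMollifier x m y * ⟪x, y⟫ ∂μ =
      ∫ y, sphericalMollifier x m y ∂μ - ∫ y, (1 - ⟪x, y⟫) * sphericalMollifier x m y ∂μ := by
    rw [← integral_sub (integrable_of_continuous_of_ae_norm_le hcont hball)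
      (integrable_of_continuous_of_ae_norm_le (by fun_prop) hball)]
    congr 1 with y
    ring
  rw [hsplit] at hparts
  linear_combination hparts

lemma integral_sphericalMollifier_ne_zero [NeZero μ] (hμ : IsRotationInvariant μ)
    (hsphere : ∀ᵐ y ∂μ, ‖y‖ = 1) (hE : 1 < Module.finrank ℝ E) {x : E} (hx : ‖x‖ = 1) (m : ℕ) :
    ∫ y, sphericalMollifier x m y ∂μ ≠ 0 := by
  have hball : ∀ᵐ y ∂μ, ‖y‖ ≤ 1 := hsphere.mono fun _ hy ↦ hy.le
  intro hzero
  rw [integral_eq_zero_iff_of_nonneg_ae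
    (hsphere.mono fun _ hy ↦ sphericalMollifier_nonneg hx hy m)
    (integrable_of_continuous_of_ae_norm_le (continuous_sphericalMollifier x m) hball)] at hzero
  have hantipodal : ∀ᵐ y ∂μ, ⟪x, y⟫ = -1 := by
    filter_upwards [hzero] with y hy
    linarith [eq_zero_of_pow_eq_zero hy]
  have hmass : μ.real Set.univ = 0 := by
    simpa [integral_congr_ae hantipodal] using integral_inner_eq_zero hμ hball hE x
  exact measureReal_univ_ne_zero hmass

theorem spherical_mollifier_concentration_general [NeZero μ] (hμ : IsRotationInvariant μ)
    (hsphere : ∀ᵐ y ∂μ, ‖y‖ = 1) (hE : 1 < Module.finrank ℝ E) {x : E} (hx : ‖x‖ = 1) (m : ℕ) :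
    (∫ y, (1 - ⟪x, y⟫) * sphericalMollifier x m y ∂μ) / ∫ y, sphericalMollifier x m y ∂μ =
      (Module.finrank ℝ E - 1) / (m + Module.finrank ℝ E - 1) := by
  have hdim : (1 : ℝ) < Module.finrank ℝ E := by exact_mod_cast hE
  have hpos : (m + Module.finrank ℝ E - 1 : ℝ) ≠ 0 := by
    have : (0 : ℝ) ≤ m := m.cast_nonneg
    linarith
  rw [div_eq_div_iff (integral_sphericalMollifier_ne_zero hμ hsphere hE hx m) hpos, mul_comm]
  exact mul_integral_one_sub_inner_mul_sphericalMollifier hμ hsphere hx m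

end SphericalMollifier

/-- Concentration of the algebraic spherical mollifiers
`φ_{x,k}(y) = ((1 + ⟨x,y⟩)/2)^k`: if `μ` is the rotation-invariant Borel
probability measure on the unit sphere `S^{n−1} ⊆ ℝⁿ` (characterized as a
probability measure concentrated on the sphere and invariant under every
linear isometry of `ℝⁿ`), then for every `x` on the sphere and every `k`,
`∫ (1 − ⟨x,y⟩) φ_{x,k}(y)² dμ(y) / ∫ φ_{x,k}(y)² dμ(y) = (n−1)/(2k+n−1)`.
In particular this quantity is independent of `x` and tends to `0` as
`k → ∞`. -/
theorem spherical_mollifier_concentration {n : ℕ} (hn : 2 ≤ n)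
    (μ : Measure (EuclideanSpace ℝ (Fin n))) [IsProbabilityMeasure μ]
    (hsphere : ∀ᵐ y ∂μ, ‖y‖ = 1)
    (hinv : ∀ e : EuclideanSpace ℝ (Fin n) ≃ₗᵢ[ℝ] EuclideanSpace ℝ (Fin n),
      Measure.map e μ = μ)
    (x : EuclideanSpace ℝ (Fin n)) (hx : ‖x‖ = 1) (k : ℕ) :
    (∫ y, (1 - ⟪x, y⟫) * (((1 + ⟪x, y⟫) / 2) ^ k) ^ 2 ∂μ) /
      (∫ y, (((1 + ⟪x, y⟫) / 2) ^ k) ^ 2 ∂μ) =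
      ((n : ℝ) - 1) / (2 * (k : ℝ) + (n : ℝ) - 1) := by
  simpa [sphericalMollifier, ← pow_mul, mul_comm k] using
    spherical_mollifier_concentration_general (fun e _ ↦ hinv e) hsphere
      (by simpa using Nat.lt_of_succ_le hn) hx (2 * k)
end

section
/- (Approximation error on the sphere, Lipschitz case.) Let n ≥ 2, let S := S^{n−1} be the unit sphere in ℝⁿ with rotation-invariant probability measure λ, and for x ∈ S and an integer k ≥ 0 let φ_{x,k}(y) := ((1 + ⟨x, y⟩)/2)^k. Suppose g : S → ℝ is Lipschitz with constant K with respect to the geodesic distance d_S(x, y) = arccos⟨x, y⟩, i.e. |g(y) − g(x)| ≤ K arccos⟨x, y⟩ for all x, y ∈ S. Then for every x ∈ S and every integer k ≥ 0, | ∫_S φ_{x,k}(y)² g(y) dλ(y) / ∫_S φ_{x,k}(y)² dλ(y) − g(x) | ≤ (K π / √2) · √((n − 1)/(2k + n − 1)). In particular the left-hand side is O(k^{−1/2}) uniformly in x. -/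
open MeasureTheory RealInnerProductSpace

/-!
Write `t = ⟪x, y⟫`. Invariance of `μ` under the rotations `exp (θ A)` with `A` skew-adjoint gives,
after differentiating at `θ = 0`, `∫ f'(y) (A y) ∂μ = 0`. Taking
`f y = ⟪b, y⟫ φ(t)` and `A y = t b - ⟪b, y⟫ x`, and summing over an orthonormal basis of vectors
`b`, yields the integration by parts formula `(n - 1) ∫ t φ(t) = ∫ (1 - t²) φ'(t)`. For
`φ(t) = ((1 + t) / 2) ^ m` it evaluates the `φ`-weighted average of
`(1 - t) / 2 = sin² (arccos t / 2)` as `(n - 1) / (2 (m + n - 1))`. Since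
`arccos t ≤ π √((1 - t) / 2)`, the Cauchy–Schwarz inequality turns this into a bound on the weighted
average of `arccos t`, hence on that of `|g y - g x|`.
-/

section CompactlyConcentrated

variable {X G : Type*} [TopologicalSpace X] [T2Space X] [MeasurableSpace X]
  [OpensMeasurableSpace X] [NormedAddCommGroup G] {μ : Measure X} {s : Set X}

lemma integrable_of_continuousOn_of_ae_mem_isCompact [IsFiniteMeasureOnCompacts μ]
    (hs : IsCompact s) (hμ : ∀ᵐ y ∂μ, y ∈ s) {f : X → G} (hf : ContinuousOn f s) :
    Integrable f μ := by
  rw [← Measure.restrict_eq_self_of_ae_mem hμ]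
  exact hf.integrableOn_compact hs

lemma hasDerivAt_integral_of_continuous_of_ae_mem_isCompact [NormedSpace ℝ G] [IsFiniteMeasure μ]
    (hs : IsCompact s) (hμ : ∀ᵐ y ∂μ, y ∈ s) {F F' : ℝ → X → G} (hF : ∀ θ, Continuous (F θ))
    (hF' : Continuous (Function.uncurry F')) (hFF' : ∀ y θ, HasDerivAt (F · y) (F' θ y) θ)
    (θ₀ : ℝ) :
    HasDerivAt (fun θ ↦ ∫ y, F θ y ∂μ) (∫ y, F' θ₀ y ∂μ) θ₀ := by
  have integrable_of_continuous {f : X → G} (hf : Continuous f) : Integrable f μ :=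
    integrable_of_continuousOn_of_ae_mem_isCompact hs hμ hf.continuousOn
  obtain ⟨C, hC⟩ :=
    ((isCompact_closedBall θ₀ 1).prod hs).exists_bound_of_continuousOn hF'.continuousOn
  refine (hasDerivAt_integral_of_dominated_loc_of_deriv_le (bound := fun _ ↦ C)
    (Metric.closedBall_mem_nhds θ₀ one_pos)
    (.of_forall fun θ ↦ (integrable_of_continuous (hF θ)).aestronglyMeasurable)
    (integrable_of_continuous (hF θ₀))
    (integrable_of_continuous (hF'.comp (.prodMk_right θ₀))).aestronglyMeasurable
    ?_ (integrable_const C) (.of_forall fun y θ _ ↦ hFF' y θ)).2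
  filter_upwards [hμ] with y hy θ hθ using hC (θ, y) ⟨hθ, hy⟩

end CompactlyConcentrated

section WeightedAverage

variable {α : Type*} [MeasurableSpace α] {μ : Measure α} {w : α → ℝ}

lemma integral_mul_sqrt_le {q : α → ℝ} (hw : 0 ≤ᵐ[μ] w) (hq : 0 ≤ᵐ[μ] q)
    (hw_int : Integrable w μ) (hwq_int : Integrable (fun y ↦ w y * q y) μ) :
    ∫ y, w y * √(q y) ∂μ ≤ √(∫ y, w y ∂μ) * √(∫ y, w y * q y ∂μ) := by
  have memLp_sqrt {f : α → ℝ} (hf : 0 ≤ᵐ[μ] f) (hf_int : Integrable f μ) :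
      MemLp (fun y ↦ √(f y)) (ENNReal.ofReal 2) μ := by
    rw [ENNReal.ofReal_ofNat, memLp_two_iff_integrable_sq
      (Real.continuous_sqrt.comp_aestronglyMeasurable hf_int.aestronglyMeasurable)]
    refine hf_int.congr ?_
    filter_upwards [hf] with y hy using (Real.sq_sqrt hy).symm
  have integral_sqrt_rpow {f : α → ℝ} (hf : 0 ≤ᵐ[μ] f) :
      ∫ y, √(f y) ^ (2 : ℝ) ∂μ = ∫ y, f y ∂μ := by
    refine integral_congr_ae ?_
    filter_upwards [hf] with y hy
    rw [Real.rpow_two, Real.sq_sqrt hy]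
  have hwq : 0 ≤ᵐ[μ] fun y ↦ w y * q y := by
    filter_upwards [hw, hq] with y hwy hqy using mul_nonneg hwy hqy
  calc ∫ y, w y * √(q y) ∂μ
      = ∫ y, √(w y) * √(w y * q y) ∂μ := by
        refine integral_congr_ae ?_
        filter_upwards [hw] with y hwy
        rw [Real.sqrt_mul hwy, ← mul_assoc, Real.mul_self_sqrt hwy]
    _ ≤ (∫ y, √(w y) ^ (2 : ℝ) ∂μ) ^ (1 / 2 : ℝ) *
          (∫ y, √(w y * q y) ^ (2 : ℝ) ∂μ) ^ (1 / 2 : ℝ) :=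
        integral_mul_le_Lp_mul_Lq_of_nonneg .two_two (.of_forall fun _ ↦ Real.sqrt_nonneg _)
          (.of_forall fun _ ↦ Real.sqrt_nonneg _) (memLp_sqrt hw hw_int) (memLp_sqrt hwq hwq_int)
    _ = √(∫ y, w y ∂μ) * √(∫ y, w y * q y ∂μ) := by
        rw [integral_sqrt_rpow hw, integral_sqrt_rpow hwq, Real.sqrt_eq_rpow, Real.sqrt_eq_rpow]

lemma abs_integral_mul_div_integral_sub_le {g h : α → ℝ} {c : ℝ} (hw : 0 ≤ᵐ[μ] w)
    (hw_int : Integrable w μ) (hw_pos : 0 < ∫ y, w y ∂μ) (hg : AEStronglyMeasurable g μ)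
    (hwh_int : Integrable (fun y ↦ w y * h y) μ) (hgh : ∀ᵐ y ∂μ, |g y - c| ≤ h y) :
    |(∫ y, w y * g y ∂μ) / (∫ y, w y ∂μ) - c| ≤ (∫ y, w y * h y ∂μ) / ∫ y, w y ∂μ := by
  have hbound : ∀ᵐ y ∂μ, ‖w y * (g y - c)‖ ≤ w y * h y := by
    filter_upwards [hw, hgh] with y hwy hy
    rw [norm_mul, Real.norm_of_nonneg hwy]
    exact mul_le_mul_of_nonneg_left hy hwy
  have hdiff_int : Integrable (fun y ↦ w y * (g y - c)) μ :=
    hwh_int.mono' (hw_int.aestronglyMeasurable.mul (hg.sub aestronglyMeasurable_const)) hbound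
  have hsplit : ∫ y, w y * g y ∂μ = ∫ y, w y * (g y - c) ∂μ + (∫ y, w y ∂μ) * c := by
    rw [← integral_mul_const, ← integral_add hdiff_int (hw_int.mul_const c)]
    simp only [mul_sub, sub_add_cancel]
  rw [hsplit, add_div, mul_div_cancel_left₀ _ hw_pos.ne', add_sub_cancel_right, abs_div,
    abs_of_pos hw_pos]
  gcongr
  exact norm_integral_le_of_norm_le hwh_int hbound

end WeightedAverage

lemma arccos_le_pi_mul_sqrt {t : ℝ} (ht : |t| ≤ 1) : Real.arccos t ≤ Real.pi * √((1 - t) / 2) := by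
  set θ := Real.arccos t
  have hθ₀ : 0 ≤ θ := Real.arccos_nonneg t
  have hθπ : θ ≤ Real.pi := Real.arccos_le_pi t
  have hsin : √((1 - t) / 2) = Real.sin (θ / 2) := by
    rw [Real.sin_half_eq_sqrt hθ₀ (by linarith [Real.pi_pos]),
      Real.cos_arccos (abs_le.1 ht).1 (abs_le.1 ht).2]
  calc θ = Real.pi * (2 / Real.pi * (θ / 2)) := by field_simp
    _ ≤ Real.pi * Real.sin (θ / 2) := by
        gcongr
        exact Real.mul_le_sin (by positivity) (by linarith)
    _ = Real.pi * √((1 - t) / 2) := by rw [hsin]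

section InnerProductSpace

variable {E : Type*} [NormedAddCommGroup E] [InnerProductSpace ℝ E]

lemma abs_inner_le_one_of_norm_eq_one {x y : E} (hx : ‖x‖ = 1) (hy : ‖y‖ = 1) : |⟪x, y⟫| ≤ 1 := by
  simpa only [hx, hy, one_mul] using abs_real_inner_le_norm x y

lemma nonneg_of_abs_sub_le_mul_arccos {g : E → ℝ} {K : ℝ} {x : E} (hx : ‖x‖ = 1)
    (hLip : ∀ y, ‖y‖ = 1 → |g y - g x| ≤ K * Real.arccos ⟪x, y⟫) : 0 ≤ K := by
  have hantipode : 0 ≤ K * Real.pi := by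
    simpa [inner_neg_right, real_inner_self_eq_norm_sq, hx] using
      (abs_nonneg _).trans (hLip (-x) (by rwa [norm_neg]))
  exact nonneg_of_mul_nonneg_left hantipode Real.pi_pos

lemma continuousOn_sphere_of_abs_sub_le_mul_arccos {g : E → ℝ} {K : ℝ}
    (hLip : ∀ x y, ‖x‖ = 1 → ‖y‖ = 1 → |g y - g x| ≤ K * Real.arccos ⟪x, y⟫) :
    ContinuousOn g (Metric.sphere 0 1) := by
  intro x hx
  rw [mem_sphere_zero_iff_norm] at hx
  have hlim : Filter.Tendsto (fun y ↦ K * Real.arccos ⟪x, y⟫)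
      (nhdsWithin x (Metric.sphere 0 1)) (nhds 0) := by
    have hcont : Continuous fun y ↦ K * Real.arccos ⟪x, y⟫ := by fun_prop
    simpa [hx] using (hcont.tendsto x).mono_left nhdsWithin_le_nhds
  refine tendsto_iff_dist_tendsto_zero.2 (squeeze_zero' (.of_forall fun _ ↦ dist_nonneg) ?_ hlim)
  filter_upwards [self_mem_nhdsWithin] with y hy
  exact hLip x y hx (mem_sphere_zero_iff_norm.1 hy)

/-- The algebraic mollifier `φ_{x,m}`, defined on the whole space although only its values on the
unit sphere matter, where it peaks at `x`. Since `φ_{x,k}² = φ_{x,2k}`, the squared mollifiers are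
again of this form. -/
noncomputable def zonalMollifier (x : E) (m : ℕ) (y : E) : ℝ := ((1 + ⟪x, y⟫) / 2) ^ m

@[fun_prop]
lemma continuous_zonalMollifier (x : E) (m : ℕ) : Continuous (zonalMollifier x m) := by
  unfold zonalMollifier
  fun_prop

lemma zonalMollifier_nonneg {x y : E} (hx : ‖x‖ = 1) (hy : ‖y‖ = 1) (m : ℕ) :
    0 ≤ zonalMollifier x m y := by
  have := (abs_le.1 (abs_inner_le_one_of_norm_eq_one hx hy)).1
  exact pow_nonneg (by linarith) m

lemma one_add_mul_inner_le_two_pow_mul_zonalMollifier {x y : E} (hx : ‖x‖ = 1) (hy : ‖y‖ = 1)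
    (m : ℕ) : 1 + m * ⟪x, y⟫ ≤ 2 ^ m * zonalMollifier x m y := by
  have hxy := (abs_le.1 (abs_inner_le_one_of_norm_eq_one hx hy)).1
  rw [zonalMollifier, ← mul_pow, mul_div_cancel₀ _ two_ne_zero]
  exact one_add_mul_le_pow (by linarith) m

section InvariantMeasure

variable [MeasurableSpace E] [BorelSpace E] {μ : Measure E}

lemma integral_comp_linearIsometryEquiv {G : Type*} [NormedAddCommGroup G] [NormedSpace ℝ G]
    {e : E ≃ₗᵢ[ℝ] E} (he : μ.map e = μ) (f : E → G) : ∫ y, f (e y) ∂μ = ∫ y, f y ∂μ :=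
  MeasurePreserving.integral_comp ⟨e.continuous.measurable, he⟩
    e.toHomeomorph.measurableEmbedding f

lemma integral_inner_eq_zero_s16 (hinv : ∀ e : E ≃ₗᵢ[ℝ] E, μ.map e = μ) (x : E) :
    ∫ y, ⟪x, y⟫ ∂μ = 0 := by
  have hodd := integral_comp_linearIsometryEquiv (hinv (.neg ℝ)) fun y ↦ ⟪x, y⟫
  simp only [LinearIsometryEquiv.coe_neg, inner_neg_right, integral_neg] at hodd
  linarith

variable [FiniteDimensional ℝ E] [IsFiniteMeasure μ]

lemma integrable_of_continuousOn_sphere {G : Type*} [NormedAddCommGroup G]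
    (hsphere : ∀ᵐ y ∂μ, ‖y‖ = 1) {f : E → G} (hf : ContinuousOn f (Metric.sphere 0 1)) :
    Integrable f μ :=
  have := FiniteDimensional.proper_real E
  integrable_of_continuousOn_of_ae_mem_isCompact (isCompact_sphere 0 1)
    (by simpa only [mem_sphere_zero_iff_norm] using hsphere) hf

lemma integral_fderiv_apply_eq_zero_of_skew {G : Type*} [NormedAddCommGroup G] [NormedSpace ℝ G]
    (hsphere : ∀ᵐ y ∂μ, ‖y‖ = 1) (hinv : ∀ e : E ≃ₗᵢ[ℝ] E, μ.map e = μ) {A : E →L[ℝ] E}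
    (hA : ∀ y z, ⟪A y, z⟫ = -⟪y, A z⟫) {f : E → G} (hf : ContDiff ℝ 1 f) :
    ∫ y, fderiv ℝ f y (A y) ∂μ = 0 := by
  have := FiniteDimensional.proper_real E
  have := FiniteDimensional.complete ℝ E
  let : NormedAlgebra ℚ (E →L[ℝ] E) := .restrictScalars ℚ ℝ _
  let R (θ : ℝ) : E →L[ℝ] E := NormedSpace.exp (θ • A)
  have hRderiv (θ : ℝ) : HasDerivAt R (A * R θ) θ := hasDerivAt_exp_smul_const' A θ
  have : Continuous R := continuous_iff_continuousAt.2 fun θ ↦ (hRderiv θ).continuousAt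
  have hAskew : A ∈ skewAdjoint (E →L[ℝ] E) := by
    rw [skewAdjoint.mem_iff, ContinuousLinearMap.star_eq_adjoint,
      (ContinuousLinearMap.eq_adjoint_iff (-A) A).2 fun y z ↦ by simp [hA]]
  have hconst (θ : ℝ) : ∫ y, f (R θ y) ∂μ = ∫ y, f y ∂μ :=
    integral_comp_linearIsometryEquiv (hinv (Unitary.linearIsometryEquiv
      ⟨R θ, NormedSpace.exp_mem_unitary_of_mem_skewAdjoint (skewAdjoint.smul_mem θ hAskew)⟩)) f
  have hderiv (y : E) (θ : ℝ) :
      HasDerivAt (fun θ ↦ f (R θ y)) (fderiv ℝ f (R θ y) (A (R θ y))) θ :=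
    (hf.differentiable one_ne_zero _).hasFDerivAt.comp_hasDerivAt θ
      ((hRderiv θ).clm_apply (hasDerivAt_const θ y) |>.congr_deriv (by simp))
  have hcont : Continuous (Function.uncurry fun θ y ↦ fderiv ℝ f (R θ y) (A (R θ y))) := by
    have := hf.continuous_fderiv one_ne_zero
    simp only [Function.uncurry_def]
    fun_prop
  have hzero := hasDerivAt_integral_of_continuous_of_ae_mem_isCompact (isCompact_sphere (0 : E) 1)
    (by simpa only [mem_sphere_zero_iff_norm] using hsphere)
    (fun θ ↦ hf.continuous.comp (R θ).continuous) hcont hderiv 0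
  simp only [Function.comp_apply, hconst] at hzero
  simpa [R] using hzero.unique (hasDerivAt_const 0 _)

open InnerProductSpace in
/-- The integrand is the derivative of `⟪b, y⟫ * φ ⟪x, y⟫` along the rotation field
`⟪x, y⟫ • b - ⟪b, y⟫ • x`. -/
lemma integral_rotation_deriv_inner_mul_comp_inner_eq_zero (hsphere : ∀ᵐ y ∂μ, ‖y‖ = 1)
    (hinv : ∀ e : E ≃ₗᵢ[ℝ] E, μ.map e = μ) {φ : ℝ → ℝ} (hφ : ContDiff ℝ 1 φ) (x b : E) :
    ∫ y, (⟪x, y⟫ * ‖b‖ ^ 2 - ⟪x, b⟫ * ⟪b, y⟫) * φ ⟪x, y⟫ -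
      (⟪b, y⟫ ^ 2 * ‖x‖ ^ 2 - ⟪x, b⟫ * ⟪b, y⟫ * ⟪x, y⟫) * deriv φ ⟪x, y⟫ ∂μ = 0 := by
  have hskew (y z : E) : ⟪(rankOne ℝ b x - rankOne ℝ x b) y, z⟫ =
      -⟪y, (rankOne ℝ b x - rankOne ℝ x b) z⟫ := by
    simp only [sub_apply, rankOne_apply, inner_sub_left, inner_sub_right, real_inner_smul_left,
      real_inner_smul_right, real_inner_comm y]
    ring
  have hf : ContDiff ℝ 1 fun y ↦ ⟪b, y⟫ * φ ⟪x, y⟫ :=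
    (contDiff_const.inner ℝ contDiff_id).mul (hφ.comp (contDiff_const.inner ℝ contDiff_id))
  rw [← integral_fderiv_apply_eq_zero_of_skew hsphere hinv hskew hf]
  congr with y
  have hinner (v : E) : HasFDerivAt (fun y ↦ ⟪v, y⟫) (innerSL ℝ v) y := (innerSL ℝ v).hasFDerivAt
  have hφ' : HasDerivAt φ (deriv φ ⟪x, y⟫) ⟪x, y⟫ :=
    (hφ.differentiable one_ne_zero _).hasDerivAt
  have hfderiv : HasFDerivAt (fun y ↦ ⟪b, y⟫ * φ ⟪x, y⟫)
      (⟪b, y⟫ • deriv φ ⟪x, y⟫ • innerSL ℝ x + φ ⟪x, y⟫ • innerSL ℝ b) y :=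
    (hinner b).mul (hφ'.comp_hasFDerivAt y (hinner x))
  rw [hfderiv.fderiv]
  simp only [sub_apply, add_apply, smul_apply, smul_eq_mul, rankOne_apply, coe_innerSL_apply,
    inner_sub_right, real_inner_smul_right, real_inner_self_eq_norm_sq, real_inner_comm b x]
  ring

lemma integral_inner_mul_comp_inner_eq_integral_mul_deriv (hsphere : ∀ᵐ y ∂μ, ‖y‖ = 1)
    (hinv : ∀ e : E ≃ₗᵢ[ℝ] E, μ.map e = μ) {φ : ℝ → ℝ} (hφ : ContDiff ℝ 1 φ) (x : E) :
    (Module.finrank ℝ E - 1) * ∫ y, ⟪x, y⟫ * φ ⟪x, y⟫ ∂μ =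
      ∫ y, (‖x‖ ^ 2 - ⟪x, y⟫ ^ 2) * deriv φ ⟪x, y⟫ ∂μ := by
  have : Continuous φ := hφ.continuous
  have : Continuous (deriv φ) := hφ.continuous_deriv le_rfl
  let b := stdOrthonormalBasis ℝ E
  have hsum := Finset.sum_eq_zero fun i (_ : i ∈ Finset.univ) ↦
    integral_rotation_deriv_inner_mul_comp_inner_eq_zero hsphere hinv hφ x (b i)
  rw [← integral_finsetSum _ fun i _ ↦ integrable_of_continuousOn_sphere hsphere (by fun_prop)]
    at hsum
  rw [← integral_const_mul, ← sub_eq_zero, ← integral_sub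
    (integrable_of_continuousOn_sphere hsphere (by fun_prop))
    (integrable_of_continuousOn_sphere hsphere (by fun_prop)), ← hsum]
  refine integral_congr_ae ?_
  filter_upwards [hsphere] with y hy
  simp only [Finset.sum_sub_distrib, ← Finset.sum_mul, b.sum_inner_mul_inner,
    b.sum_sq_inner_right, b.norm_eq_one, hy, Finset.sum_const, Finset.card_univ, Fintype.card_fin,
    nsmul_eq_mul]
  ring

lemma integral_zonalMollifier_pos [NeZero μ] (hsphere : ∀ᵐ y ∂μ, ‖y‖ = 1)
    (hinv : ∀ e : E ≃ₗᵢ[ℝ] E, μ.map e = μ) {x : E} (hx : ‖x‖ = 1) (m : ℕ) :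
    0 < ∫ y, zonalMollifier x m y ∂μ := by
  have hinner_int : Integrable (fun y ↦ (m : ℝ) * ⟪x, y⟫) μ :=
    integrable_of_continuousOn_sphere hsphere (by fun_prop)
  have hlower : μ.real Set.univ ≤ 2 ^ m * ∫ y, zonalMollifier x m y ∂μ := by
    calc μ.real Set.univ = ∫ y, 1 + m * ⟪x, y⟫ ∂μ := by
          rw [integral_add (integrable_const 1) hinner_int, integral_const_mul,
            integral_inner_eq_zero_s16 hinv, integral_const]
          simp
      _ ≤ ∫ y, 2 ^ m * zonalMollifier x m y ∂μ := by
          refine integral_mono_ae ((integrable_const 1).add hinner_int)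
            (integrable_of_continuousOn_sphere hsphere (by fun_prop)) ?_
          filter_upwards [hsphere] with y hy
          exact one_add_mul_inner_le_two_pow_mul_zonalMollifier hx hy m
      _ = 2 ^ m * ∫ y, zonalMollifier x m y ∂μ := integral_const_mul _ _
  exact pos_of_mul_pos_right (measureReal_univ_pos.trans_le hlower) (by positivity)

lemma integral_zonalMollifier_mul_one_sub_inner (hsphere : ∀ᵐ y ∂μ, ‖y‖ = 1)
    (hinv : ∀ e : E ≃ₗᵢ[ℝ] E, μ.map e = μ) {x : E} (hx : ‖x‖ = 1) (m : ℕ) :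
    (m + Module.finrank ℝ E - 1) * ∫ y, zonalMollifier x m y * (1 - ⟪x, y⟫) ∂μ =
      (Module.finrank ℝ E - 1) * ∫ y, zonalMollifier x m y ∂μ := by
  have hφ : ContDiff ℝ 1 fun t : ℝ ↦ ((1 + t) / 2) ^ m := by fun_prop
  have hderiv (t : ℝ) : (1 - t ^ 2) * deriv (fun t : ℝ ↦ ((1 + t) / 2) ^ m) t =
      m * (((1 + t) / 2) ^ m * (1 - t)) := by
    have : HasDerivAt (fun t : ℝ ↦ ((1 + t) / 2) ^ m) (m * ((1 + t) / 2) ^ (m - 1) * (1 / 2)) t :=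
      (((hasDerivAt_id t).const_add 1).div_const 2).pow m
    rw [this.deriv]
    cases m with
    | zero => simp
    | succ m => rw [Nat.add_sub_cancel]; ring
  have hparts : (Module.finrank ℝ E - 1) * ∫ y, ⟪x, y⟫ * zonalMollifier x m y ∂μ =
      m * ∫ y, zonalMollifier x m y * (1 - ⟪x, y⟫) ∂μ := by
    have := integral_inner_mul_comp_inner_eq_integral_mul_deriv hsphere hinv hφ x
    simpa only [zonalMollifier, hx, one_pow, hderiv, integral_const_mul] using this
  have hsplit : ∫ y, zonalMollifier x m y * (1 - ⟪x, y⟫) ∂μ =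
      ∫ y, zonalMollifier x m y ∂μ - ∫ y, ⟪x, y⟫ * zonalMollifier x m y ∂μ := by
    rw [← integral_sub (integrable_of_continuousOn_sphere hsphere (by fun_prop))
      (integrable_of_continuousOn_sphere hsphere (by fun_prop))]
    congr with y
    ring
  linear_combination (Module.finrank ℝ E - 1 : ℝ) * hsplit - hparts

lemma integral_zonalMollifier_mul_sqrt_div_le [NeZero μ] (hsphere : ∀ᵐ y ∂μ, ‖y‖ = 1)
    (hinv : ∀ e : E ≃ₗᵢ[ℝ] E, μ.map e = μ) {x : E} (hx : ‖x‖ = 1) {m : ℕ}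
    (hm : 1 < m + Module.finrank ℝ E) :
    (∫ y, zonalMollifier x m y * √((1 - ⟪x, y⟫) / 2) ∂μ) / ∫ y, zonalMollifier x m y ∂μ ≤
      √((Module.finrank ℝ E - 1) / (m + Module.finrank ℝ E - 1)) / √2 := by
  set n := Module.finrank ℝ E
  set r : ℝ := (n - 1) / (m + n - 1) with hr
  set D := ∫ y, zonalMollifier x m y ∂μ
  have hD_pos : 0 < D := integral_zonalMollifier_pos hsphere hinv hx m
  have hmn : (0 : ℝ) < m + n - 1 := sub_pos.2 (by exact_mod_cast hm)
  have hsecond : ∫ y, zonalMollifier x m y * ((1 - ⟪x, y⟫) / 2) ∂μ = r / 2 * D := by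
    have := integral_zonalMollifier_mul_one_sub_inner hsphere hinv hx m
    simp only [← mul_div_assoc, integral_div, hr]
    field_simp
    linarith
  rw [div_le_iff₀ hD_pos]
  calc ∫ y, zonalMollifier x m y * √((1 - ⟪x, y⟫) / 2) ∂μ
      ≤ √D * √(∫ y, zonalMollifier x m y * ((1 - ⟪x, y⟫) / 2) ∂μ) := by
        refine integral_mul_sqrt_le ?_ ?_
          (integrable_of_continuousOn_sphere hsphere (by fun_prop))
          (integrable_of_continuousOn_sphere hsphere (by fun_prop))
        · filter_upwards [hsphere] with y hy using zonalMollifier_nonneg hx hy m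
        · filter_upwards [hsphere] with y hy
          have := (abs_le.1 (abs_inner_le_one_of_norm_eq_one hx hy)).2
          exact div_nonneg (sub_nonneg.2 this) zero_le_two
    _ = √r / √2 * D := by
        rw [hsecond, Real.sqrt_mul' _ hD_pos.le, Real.sqrt_div' _ zero_le_two, mul_left_comm,
          Real.mul_self_sqrt hD_pos.le]

theorem spherical_approximation_error_lipschitz_general [NeZero μ] (hsphere : ∀ᵐ y ∂μ, ‖y‖ = 1)
    (hinv : ∀ e : E ≃ₗᵢ[ℝ] E, μ.map e = μ) {g : E → ℝ} (hg : AEStronglyMeasurable g μ) {K : ℝ}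
    {x : E} (hx : ‖x‖ = 1) (hLip : ∀ y, ‖y‖ = 1 → |g y - g x| ≤ K * Real.arccos ⟪x, y⟫) {m : ℕ}
    (hm : 1 < m + Module.finrank ℝ E) :
    |(∫ y, zonalMollifier x m y * g y ∂μ) / (∫ y, zonalMollifier x m y ∂μ) - g x| ≤
      K * Real.pi / √2 * √((Module.finrank ℝ E - 1) / (m + Module.finrank ℝ E - 1)) := by
  have hK : 0 ≤ K := nonneg_of_abs_sub_le_mul_arccos hx hLip
  have hdist : ∀ᵐ y ∂μ, |g y - g x| ≤ K * Real.pi * √((1 - ⟪x, y⟫) / 2) := by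
    filter_upwards [hsphere] with y hy
    rw [mul_assoc]
    exact (hLip y hy).trans (mul_le_mul_of_nonneg_left
      (arccos_le_pi_mul_sqrt (abs_inner_le_one_of_norm_eq_one hx hy)) hK)
  calc |(∫ y, zonalMollifier x m y * g y ∂μ) / (∫ y, zonalMollifier x m y ∂μ) - g x|
      ≤ (∫ y, zonalMollifier x m y * (K * Real.pi * √((1 - ⟪x, y⟫) / 2)) ∂μ) /
          ∫ y, zonalMollifier x m y ∂μ :=
        abs_integral_mul_div_integral_sub_le
          (by filter_upwards [hsphere] with y hy using zonalMollifier_nonneg hx hy m)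
          (integrable_of_continuousOn_sphere hsphere (by fun_prop))
          (integral_zonalMollifier_pos hsphere hinv hx m) hg
          (integrable_of_continuousOn_sphere hsphere (by fun_prop)) hdist
    _ = K * Real.pi * ((∫ y, zonalMollifier x m y * √((1 - ⟪x, y⟫) / 2) ∂μ) /
          ∫ y, zonalMollifier x m y ∂μ) := by
        simp only [mul_left_comm _ (K * Real.pi), integral_const_mul, mul_div_assoc]
    _ ≤ K * Real.pi *
          (√((Module.finrank ℝ E - 1) / (m + Module.finrank ℝ E - 1)) / √2) := by
        exact mul_le_mul_of_nonneg_left (integral_zonalMollifier_mul_sqrt_div_le hsphere hinv hx hm)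
          (mul_nonneg hK Real.pi_nonneg)
    _ = _ := by ring

end InvariantMeasure

end InnerProductSpace

/-- Approximation error on the sphere, Lipschitz case: let `μ` be the
rotation-invariant Borel probability measure on the unit sphere
`S^{n−1} ⊆ ℝⁿ` (characterized as a probability measure concentrated on the
sphere and invariant under every linear isometry of `ℝⁿ`), let
`φ_{x,k}(y) = ((1 + ⟨x,y⟩)/2)^k`, and let `g` be Lipschitz with constant `K`
with respect to the geodesic distance `arccos⟨x,y⟩` on the sphere.  Then for
every `x` on the sphere and every `k`,
`| ∫ φ_{x,k}² g dμ / ∫ φ_{x,k}² dμ − g(x) | ≤ (Kπ/√2) √((n−1)/(2k+n−1))`. -/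
theorem spherical_approximation_error_lipschitz {n : ℕ} (hn : 2 ≤ n)
    (μ : Measure (EuclideanSpace ℝ (Fin n))) [IsProbabilityMeasure μ]
    (hsphere : ∀ᵐ y ∂μ, ‖y‖ = 1)
    (hinv : ∀ e : EuclideanSpace ℝ (Fin n) ≃ₗᵢ[ℝ] EuclideanSpace ℝ (Fin n),
      Measure.map e μ = μ)
    (g : EuclideanSpace ℝ (Fin n) → ℝ) (K : ℝ)
    (hLip : ∀ x y : EuclideanSpace ℝ (Fin n), ‖x‖ = 1 → ‖y‖ = 1 →
      |g y - g x| ≤ K * Real.arccos ⟪x, y⟫) :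
    ∀ x : EuclideanSpace ℝ (Fin n), ‖x‖ = 1 → ∀ k : ℕ,
      |(∫ y, (((1 + ⟪x, y⟫) / 2) ^ k) ^ 2 * g y ∂μ) /
          (∫ y, (((1 + ⟪x, y⟫) / 2) ^ k) ^ 2 ∂μ) - g x| ≤
        (K * Real.pi / Real.sqrt 2) *
          Real.sqrt (((n : ℝ) - 1) / (2 * (k : ℝ) + (n : ℝ) - 1)) := by
  intro x hx k
  have hg := (integrable_of_continuousOn_sphere hsphere
    (continuousOn_sphere_of_abs_sub_le_mul_arccos hLip)).aestronglyMeasurable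
  simpa [zonalMollifier, ← pow_mul, mul_comm k 2] using
    spherical_approximation_error_lipschitz_general hsphere hinv hg hx (fun y ↦ hLip x y hx)
      (m := 2 * k) (by rw [finrank_euclideanSpace_fin]; omega)
end
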